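/- Let K be an algebraically closed field, n ≥ 2 and 1 ≤ c ≤ n an integer. In the polynomial ring K[T_{ij} : 0 ≤ i < j ≤ n+2], the ideal generated by the elements −T_{ik}T_{jl} + T_{il}T_{jk} for all 0 ≤ i < j ≤ c < k < l ≤ n+2, together with the full Plücker relations T_{ij}T_{kl} − T_{ik}T_{jl} + T_{il}T_{jk} for all remaining quadruples 0 ≤ i < j < k < l ≤ n+2 (i.e. those not satisfying j ≤ c < k), is a prime ideal. -/

import Mathlib

open MvPolynomial

/-- The index set of the polynomial ring `K[T_{ij} : 0 ≤ i < j ≤ n+2]`. -/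
abbrev PairIdx (n : ℕ) : Type := {p : ℕ × ℕ // p.1 < p.2 ∧ p.2 ≤ n + 2}

/-- The variable `T_{ab}` of `K[T_{ij} : 0 ≤ i < j ≤ n+2]` (junk value `0` for
invalid index pairs). -/
noncomputable def T (K : Type*) [Field K] (n a b : ℕ) :
    MvPolynomial (PairIdx n) K :=
  if h : a < b ∧ b ≤ n + 2 then X ⟨(a, b), h⟩ else 0

/-!
The ideal is the kernel of the map sending `T_{ab}` to the `2 × 2` minor `x_a y_b - x_b y_a`, with
the second term dropped when `a ≤ c < b`; the target is a domain. Call a monomial nonnesting if no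
two of its variables `T_{il}`, `T_{jk}` satisfy `i < j < k < l`. The relations straighten every
monomial into nonnesting ones. For a lexicographic order the image of a nonnesting monomial has
leading monomial recording the multiset of its left and the multiset of its right endpoints. These
determine the nonnesting monomial, so nonnesting monomials have linearly independent images, and the
relations exhaust the kernel.
-/

open scoped MonomialOrder

section LeadingMonomials

variable {σ τ ι R : Type*} [CommRing R] {m : MonomialOrder τ}

theorem coeff_degree_sum_smul_of_monic {f : ι → MvPolynomial τ R} {g : ι → R} {s : Finset ι}
    {i : ι} (hi : i ∈ s) (hmonic : m.Monic (f i))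
    (hlt : ∀ j ∈ s, j ≠ i → g j ≠ 0 → m.degree (f j) ≺[m] m.degree (f i)) :
    coeff (m.degree (f i)) (∑ j ∈ s, g j • f j) = g i := by
  rw [coeff_sum, Finset.sum_eq_single_of_mem i hi, coeff_smul, hmonic.coeff_degree, smul_eq_mul,
    mul_one]
  intro j hj hji
  by_cases hgj : g j = 0
  · rw [hgj, zero_smul, coeff_zero]
  · rw [coeff_smul, MonomialOrder.coeff_eq_zero_of_lt (hlt j hj hji hgj), smul_zero]

theorem linearIndependent_of_monic_of_injective_degree {f : ι → MvPolynomial τ R}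
    (hmonic : ∀ i, m.Monic (f i)) (hinj : Function.Injective fun i ↦ m.degree (f i)) :
    LinearIndependent R f := by
  classical
  rw [linearIndependent_iff']
  intro s g hsum
  by_contra! hne
  obtain ⟨i, hi, hmax⟩ := Finset.exists_max_image (s.filter fun i ↦ g i ≠ 0)
    (fun i ↦ m.toSyn (m.degree (f i))) (hne.imp fun _ ↦ Finset.mem_filter.mpr)
  obtain ⟨his, hgi⟩ := Finset.mem_filter.mp hi
  apply hgi
  rw [← coeff_degree_sum_smul_of_monic (g := g) his (hmonic i), hsum, coeff_zero]
  intro j hj hji hgj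
  exact (hmax j (Finset.mem_filter.mpr ⟨hj, hgj⟩)).lt_of_ne
    fun h ↦ hji (hinj (m.toSyn.injective h))

variable {φ : MvPolynomial σ R →ₐ[R] MvPolynomial τ R}

theorem map_monomial_one_eq_prod (d : σ →₀ ℕ) :
    φ (monomial d 1) = ∏ p ∈ d.support, φ (X p) ^ d p := by
  rw [monomial_eq, C_1, one_mul, Finsupp.prod, map_prod]
  simp only [map_pow]

theorem monic_map_monomial_one (hφ : ∀ p, m.Monic (φ (X p))) (d : σ →₀ ℕ) :
    m.Monic (φ (monomial d 1)) := by
  rw [map_monomial_one_eq_prod]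
  exact MonomialOrder.Monic.prod fun p _ ↦ (hφ p).pow

theorem degree_map_monomial_one [Nontrivial R] (hφ : ∀ p, m.Monic (φ (X p))) (d : σ →₀ ℕ) :
    m.degree (φ (monomial d 1)) = d.sum fun p k ↦ k • m.degree (φ (X p)) := by
  rw [map_monomial_one_eq_prod, MonomialOrder.degree_prod_of_regular]
  · refine Finset.sum_congr rfl fun p _ ↦
      MonomialOrder.degree_pow_of_pow_leadingCoeff_ne_zero ?_
    rw [(hφ p).leadingCoeff_eq_one, one_pow]
    exact one_ne_zero
  · intro p _
    rw [(hφ p).pow.leadingCoeff_eq_one]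
    exact isRegular_one

theorem disjoint_restrictSupport_ker_of_injOn_degree [Nontrivial R] {S : Set (σ →₀ ℕ)}
    (hφ : ∀ p, m.Monic (φ (X p)))
    (hS : S.InjOn fun d ↦ d.sum fun p k ↦ k • m.degree (φ (X p))) :
    Disjoint (restrictSupport R S) (LinearMap.ker φ.toLinearMap) := by
  have hindep : LinearIndependent R (φ.toLinearMap ∘ fun d : S ↦ monomial d.1 (1 : R)) := by
    refine linearIndependent_of_monic_of_injective_degree (m := m)
      (fun d ↦ monic_map_monomial_one hφ d.1) fun d e h ↦ Subtype.ext (hS d.2 e.2 ?_)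
    simpa only [Function.comp_apply, AlgHom.toLinearMap_apply, degree_map_monomial_one hφ] using h
  rw [restrictSupport_eq_span, Set.image_eq_range]
  exact Submodule.range_ker_disjoint hindep

end LeadingMonomials

theorem X_mul_X_eq_monomial {σ R : Type*} [CommSemiring R] (x y : σ) :
    (X x * X y : MvPolynomial σ R) = monomial (Finsupp.single x 1 + Finsupp.single y 1) 1 := by
  rw [X, X, monomial_mul, one_mul]

theorem ideal_eq_ker_of_disjoint_of_sup_eq_top {R A B : Type*} [CommRing R] [CommRing A]
    [CommRing B] [Algebra R A] [Algebra R B] {φ : A →ₐ[R] B} {I : Ideal A} {N : Submodule R A}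
    (hI : I ≤ RingHom.ker φ) (hN : Disjoint N (LinearMap.ker φ.toLinearMap))
    (hsup : I.restrictScalars R ⊔ N = ⊤) : I = RingHom.ker φ := by
  have h : I.restrictScalars R = LinearMap.ker φ.toLinearMap :=
    eq_of_le_of_inf_le_of_le_sup (z := N) (fun _ hx ↦ hI hx)
      (hN.symm.eq_bot.trans_le bot_le) (hsup.symm ▸ le_top)
  ext x
  exact SetLike.ext_iff.mp h x

section Marginals

variable {ι α β M : Type*} [AddCommMonoid M] [LinearOrder M] [IsOrderedCancelAddMonoid M]

theorem exists_lt_of_mapDomain_eq_of_lt {f : ι → α} {d e : ι →₀ M}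
    (h : d.mapDomain f = e.mapDomain f) {q : ι} (hq : e q < d q) :
    ∃ p, f p = f q ∧ d p < e p := by
  classical
  have hsum (u : ι →₀ M) (hu : u.support ⊆ d.support ∪ e.support) :
      u.mapDomain f (f q) = ∑ p ∈ d.support ∪ e.support with f p = f q, u p := by
    rw [Finsupp.mapDomain_apply_eq_sum]
    refine Finset.sum_subset (Finset.filter_subset_filter _ hu) fun p hp hpu ↦ ?_
    simpa [(Finset.mem_filter.mp hp).2] using hpu
  by_contra! hle
  refine (Finset.sum_lt_sum (s := {p ∈ d.support ∪ e.support | f p = f q})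
    (fun p hp ↦ hle p (Finset.mem_filter.mp hp).2) ⟨q, ?_, hq⟩).ne ?_
  · by_contra hmem
    simp only [Finset.mem_filter, Finset.mem_union, Finsupp.mem_support_iff] at hmem
    grind
  · rw [← hsum e Finset.subset_union_right, ← hsum d Finset.subset_union_left, h]

variable [CanonicallyOrderedAdd M] [LinearOrder α] [LinearOrder β]

theorem le_of_isChain_of_mapDomain_eq {d e : α × β →₀ M}
    (he : IsChain (· ≤ ·) (e.support : Set (α × β)))
    (hfst : d.mapDomain Prod.fst = e.mapDomain Prod.fst)
    (hsnd : d.mapDomain Prod.snd = e.mapDomain Prod.snd) {q : α × β}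
    (hmin : ∀ p, d p ≠ e p → toLex q ≤ toLex p) : d q ≤ e q := by
  by_contra! hq
  obtain ⟨p, hpq, hp⟩ := exists_lt_of_mapDomain_eq_of_lt hfst hq
  obtain ⟨r, hrq, hr⟩ := exists_lt_of_mapDomain_eq_of_lt hsnd hq
  have hqp : q.2 < p.2 := by
    have hle := Prod.Lex.toLex_le_toLex.mp (hmin p hp.ne)
    have hne : p.2 ≠ q.2 := fun h ↦ hp.not_gt (Prod.ext hpq h ▸ hq)
    grind
  have hqr : q.1 < r.1 := by
    have hle := Prod.Lex.toLex_le_toLex.mp (hmin r hr.ne)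
    have hne : r.1 ≠ q.1 := fun h ↦ hr.not_gt (Prod.ext h hrq ▸ hq)
    grind
  have hp_mem : p ∈ e.support := Finsupp.mem_support_iff.mpr (zero_le.trans_lt hp).ne'
  have hr_mem : r ∈ e.support := Finsupp.mem_support_iff.mpr (zero_le.trans_lt hr).ne'
  rcases he.total hp_mem hr_mem with hpr | hrp
  · exact (hpr.2.trans_eq hrq).not_gt hqp
  · exact (hrp.1.trans_eq hpq).not_gt hqr

theorem eq_of_isChain_of_mapDomain_eq {d e : α × β →₀ M}
    (hd : IsChain (· ≤ ·) (d.support : Set (α × β)))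
    (he : IsChain (· ≤ ·) (e.support : Set (α × β)))
    (hfst : d.mapDomain Prod.fst = e.mapDomain Prod.fst)
    (hsnd : d.mapDomain Prod.snd = e.mapDomain Prod.snd) : d = e := by
  classical
  by_contra hne
  obtain ⟨q, hq, hmin⟩ := Finset.exists_min_image (d.neLocus e) toLex
    (Finsupp.nonempty_neLocus_iff.mpr hne)
  simp only [Finsupp.mem_neLocus] at hq hmin
  exact hq (le_antisymm (le_of_isChain_of_mapDomain_eq he hfst hsnd hmin)
    (le_of_isChain_of_mapDomain_eq hd hfst.symm hsnd.symm fun p hp ↦ hmin p hp.symm))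

end Marginals

section DegenerateMinor

variable {α : Type*}

/-- The index of the entry in row `r` and column `a` of the generic `2 × α` matrix. In the
lexicographic monomial order smaller indices are larger variables, so the order dual makes entries
in later columns larger. -/
def entryIdx (r : Fin 2) (a : α) : (α ×ₗ Fin 2)ᵒᵈ :=
  OrderDual.toDual (toLex (a, r))

theorem entryIdx_inj {r s : Fin 2} {a b : α} : entryIdx r a = entryIdx s b ↔ r = s ∧ a = b := by
  simp [entryIdx, and_comm]

theorem entryIdx_injective (r : Fin 2) : Function.Injective (entryIdx r : α → (α ×ₗ Fin 2)ᵒᵈ) :=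
  fun _ _ h ↦ (entryIdx_inj.mp h).2

theorem mapDomain_entryIdx_add_inj {M : Type*} [AddCommMonoid M] {u v u' v' : α →₀ M} :
    u.mapDomain (entryIdx 0) + v.mapDomain (entryIdx 1) =
      u'.mapDomain (entryIdx 0) + v'.mapDomain (entryIdx 1) ↔ u = u' ∧ v = v' := by
  have happly (r s : Fin 2) (hrs : r ≠ s) (w : α →₀ M) (a : α) :
      w.mapDomain (entryIdx r) (entryIdx s a) = 0 :=
    Finsupp.mapDomain_of_notMem_range _ _ (by simp [entryIdx_inj, hrs])
  refine ⟨fun h ↦ ⟨?_, ?_⟩, by rintro ⟨rfl, rfl⟩; rfl⟩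
  · ext a
    simpa [happly, Finsupp.mapDomain_apply (entryIdx_injective _)] using
      DFunLike.congr_fun h (entryIdx 0 a)
  · ext a
    simpa [happly, Finsupp.mapDomain_apply (entryIdx_injective _)] using
      DFunLike.congr_fun h (entryIdx 1 a)

theorem sum_nsmul_single_entryIdx (d : α × α →₀ ℕ) :
    (d.sum fun p k ↦
        k • (Finsupp.single (entryIdx 0 p.1) 1 + Finsupp.single (entryIdx 1 p.2) 1)) =
      (d.mapDomain Prod.fst).mapDomain (entryIdx 0) +
        (d.mapDomain Prod.snd).mapDomain (entryIdx 1) := by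
  rw [← Finsupp.mapDomain_comp, ← Finsupp.mapDomain_comp]
  simp [Finsupp.mapDomain, Finsupp.sum_add]

variable [LinearOrder α]

theorem injOn_sum_nsmul_single_entryIdx :
    {d : α × α →₀ ℕ | IsChain (· ≤ ·) (d.support : Set (α × α))}.InjOn fun d ↦
      d.sum fun p k ↦
        k • (Finsupp.single (entryIdx 0 p.1) 1 + Finsupp.single (entryIdx 1 p.2) 1) := by
  intro d hd e he h
  simp only [sum_nsmul_single_entryIdx] at h
  obtain ⟨hfst, hsnd⟩ := mapDomain_entryIdx_add_inj.mp h
  exact eq_of_isChain_of_mapDomain_eq hd he hfst hsnd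

theorem entryIdx_one_le_entryIdx {r : Fin 2} {a b : α} (h : a ≤ b) :
    entryIdx 1 b ≤ entryIdx r a :=
  OrderDual.toDual_le_toDual.mpr <| Prod.Lex.toLex_le_toLex.mpr <|
    h.lt_or_eq.imp_right fun h ↦ ⟨h, Fin.le_last r⟩

variable (R : Type*) [CommRing R]

/-- The minor on columns `a` and `b` of the generic `2 × α` matrix, reduced to its diagonal term
when the cut after `c` separates `a` from `b`. -/
noncomputable def degenerateMinor (c a b : α) : MvPolynomial (α ×ₗ Fin 2)ᵒᵈ R :=
  X (entryIdx 0 a) * X (entryIdx 1 b) -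
    if a ≤ c ∧ c < b then 0 else X (entryIdx 0 b) * X (entryIdx 1 a)

theorem degenerateMinor_relation (c : α) {i j k l : α} (hij : i < j) (hjk : j < k) (hkl : k < l) :
    (if j ≤ c ∧ c < k then 0 else degenerateMinor R c i j * degenerateMinor R c k l) -
      degenerateMinor R c i k * degenerateMinor R c j l +
      degenerateMinor R c i l * degenerateMinor R c j k = 0 := by
  unfold degenerateMinor
  split_ifs <;> grind

variable [WellFoundedLT α]

theorem antidiagonal_lex_lt_diagonal {a b : α} (hab : a < b) :
    Finsupp.single (entryIdx 0 b) 1 + Finsupp.single (entryIdx 1 a) 1 ≺[MonomialOrder.lex]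
      Finsupp.single (entryIdx 0 a) 1 + Finsupp.single (entryIdx 1 b) 1 := by
  rw [MonomialOrder.lex_lt_iff, Finsupp.Lex.lt_iff]
  refine ⟨entryIdx 1 b, fun x hx ↦ ?_, ?_⟩
  · have hne (r : Fin 2) {a : α} (ha : a ≤ b) : x ≠ entryIdx r a :=
      (hx.trans_le (entryIdx_one_le_entryIdx ha)).ne
    simp [hne _ hab.le, hne _ le_rfl]
  · simp [entryIdx_inj, hab.ne]

theorem degree_antidiagonal_lt_degree_diagonal [Nontrivial R] {a b : α} (hab : a < b) :
    MonomialOrder.lex.degree (X (entryIdx 0 b) * X (entryIdx 1 a) : MvPolynomial _ R)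
      ≺[MonomialOrder.lex]
    MonomialOrder.lex.degree (X (entryIdx 0 a) * X (entryIdx 1 b) : MvPolynomial _ R) := by
  classical
  simpa only [X_mul_X_eq_monomial, MonomialOrder.degree_monomial, one_ne_zero, if_false] using
    antidiagonal_lex_lt_diagonal hab

theorem degree_degenerateMinor [Nontrivial R] (c : α) {a b : α} (hab : a < b) :
    MonomialOrder.lex.degree (degenerateMinor R c a b) =
      Finsupp.single (entryIdx 0 a) 1 + Finsupp.single (entryIdx 1 b) 1 := by
  classical
  have hdiag : MonomialOrder.lex.degree (degenerateMinor R c a b) =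
      MonomialOrder.lex.degree (X (entryIdx 0 a) * X (entryIdx 1 b) : MvPolynomial _ R) := by
    unfold degenerateMinor
    split_ifs
    · rw [sub_zero]
    · exact MonomialOrder.degree_sub_of_lt (degree_antidiagonal_lt_degree_diagonal R hab)
  rw [hdiag, X_mul_X_eq_monomial, MonomialOrder.degree_monomial, if_neg one_ne_zero]

theorem monic_degenerateMinor (c : α) {a b : α} (hab : a < b) :
    MonomialOrder.lex.Monic (degenerateMinor R c a b) := by
  nontriviality R
  have hdiag : MonomialOrder.lex.Monic
      (X (entryIdx 0 a) * X (entryIdx 1 b) : MvPolynomial _ R) :=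
    MonomialOrder.monic_X.mul MonomialOrder.monic_X
  unfold degenerateMinor
  split_ifs
  · rwa [sub_zero]
  · exact (MonomialOrder.leadingCoeff_sub_of_lt
      (degree_antidiagonal_lt_degree_diagonal R hab)).trans hdiag

end DegenerateMinor

section Nonnesting

variable {n : ℕ}

/-- The exponents of the nonnesting monomials in the `T_{ij}`. Two index pairs are incomparable in
the product order exactly when one is nested strictly inside the other. -/
def nonnestingExponents (n : ℕ) : Set (PairIdx n →₀ ℕ) :=
  {d | IsChain (· ≤ ·) (d.support : Set (PairIdx n))}

theorem single_add_single_le_of_ne {ι : Type*} {d : ι →₀ ℕ} {p q : ι} (hpq : p ≠ q)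
    (hp : p ∈ d.support) (hq : q ∈ d.support) :
    Finsupp.single p 1 + Finsupp.single q 1 ≤ d := by
  classical
  intro x
  rw [Finsupp.mem_support_iff] at hp hq
  rw [Finsupp.add_apply, Finsupp.single_apply, Finsupp.single_apply]
  grind

theorem exists_nested_pair_of_notMem_nonnestingExponents {d : PairIdx n →₀ ℕ}
    (hd : d ∉ nonnestingExponents n) :
    ∃ (e : PairIdx n →₀ ℕ) (p q : PairIdx n), p.1.1 < q.1.1 ∧ q.1.2 < p.1.2 ∧
      d = e + (Finsupp.single p 1 + Finsupp.single q 1) := by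
  obtain ⟨p, hp, q, hq, h₁, h₂⟩ :
      ∃ p ∈ d.support, ∃ q ∈ d.support, p.1.1 < q.1.1 ∧ q.1.2 < p.1.2 := by
    by_contra! hnest
    refine hd fun p hp q hq _ ↦ ?_
    have hpq := hnest p hp q hq
    have hqp := hnest q hq p hp
    simp only [← Subtype.coe_le_coe, Prod.le_def]
    lia
  have hpq : p ≠ q := fun h ↦ h₁.ne (congrArg (·.1.1) h)
  have hle := single_add_single_le_of_ne hpq hp hq
  exact ⟨_, p, q, h₁, h₂, (tsub_add_cancel_of_le hle).symm⟩

/-- The sum of the squared lengths of the index pairs in a monomial, which every straightening step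
decreases. -/
noncomputable def squaredLength (n : ℕ) : (PairIdx n →₀ ℕ) →+ ℕ :=
  Finsupp.weight fun p ↦ (p.1.2 - p.1.1) ^ 2

theorem squaredLength_single (p : PairIdx n) :
    squaredLength n (Finsupp.single p 1) = (p.1.2 - p.1.1) ^ 2 := by
  rw [squaredLength, Finsupp.weight_single, one_smul]

theorem sq_length_crossing_lt_nested {i j k l : ℕ} (hij : i < j) (hjk : j < k) (hkl : k < l) :
    (k - i) ^ 2 + (l - j) ^ 2 < (l - i) ^ 2 + (k - j) ^ 2 := by
  have hik := hij.trans hjk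
  have hjl := hjk.trans hkl
  zify [hik.le, hjl.le, (hik.trans hkl).le, hjk.le]
  have hpos : 0 < ((j : ℤ) - i) * (l - k) := mul_pos (by lia) (by lia)
  nlinarith

theorem sq_length_disjoint_lt_nested {i j k l : ℕ} (hij : i < j) (hjk : j < k) (hkl : k < l) :
    (j - i) ^ 2 + (l - k) ^ 2 < (l - i) ^ 2 + (k - j) ^ 2 := by
  zify [hij.le, hkl.le, (hij.trans (hjk.trans hkl)).le, hjk.le]
  nlinarith

theorem injOn_nonnestingExponents_sum_nsmul_single_entryIdx :
    (nonnestingExponents n).InjOn fun d ↦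
      d.sum fun p k ↦
        k • (Finsupp.single (entryIdx 0 p.1.1) 1 + Finsupp.single (entryIdx 1 p.1.2) 1) := by
  classical
  intro d hd e he h
  have hchain {u : PairIdx n →₀ ℕ} (hu : u ∈ nonnestingExponents n) :
      IsChain (· ≤ ·) ((u.mapDomain Subtype.val).support : Set (ℕ × ℕ)) := by
    rw [Finsupp.mapDomain_support_of_injective Subtype.val_injective, Finset.coe_image]
    exact IsChain.image_of_map_rel _ _ Subtype.val (fun _ _ h ↦ h) hu
  refine Finsupp.mapDomain_injective Subtype.val_injective
    (injOn_sum_nsmul_single_entryIdx (hchain hd) (hchain he) ?_)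
  simpa only [Finsupp.sum_mapDomain_index, zero_smul, add_smul, implies_true] using h

end Nonnesting

section DegenerateMinorHom

variable (R : Type*) [CommRing R] (n c : ℕ)

/-- The parametrization of the degenerate Plücker algebra by degenerate minors. -/
noncomputable def degenerateMinorHom :
    MvPolynomial (PairIdx n) R →ₐ[R] MvPolynomial (ℕ ×ₗ Fin 2)ᵒᵈ R :=
  aeval fun p ↦ degenerateMinor R c p.1.1 p.1.2

theorem degenerateMinorHom_X (p : PairIdx n) :
    degenerateMinorHom R n c (X p) = degenerateMinor R c p.1.1 p.1.2 :=
  aeval_X _ p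

theorem disjoint_restrictSupport_nonnestingExponents_ker [Nontrivial R] :
    Disjoint (restrictSupport R (nonnestingExponents n))
      (LinearMap.ker (degenerateMinorHom R n c).toLinearMap) := by
  refine disjoint_restrictSupport_ker_of_injOn_degree (m := MonomialOrder.lex) (fun p ↦ ?_) ?_
  · rw [degenerateMinorHom_X]
    exact monic_degenerateMinor R c p.2.1
  · have hdeg (p : PairIdx n) := degree_degenerateMinor R c p.2.1
    simpa only [degenerateMinorHom_X, hdeg] using
      injOn_nonnestingExponents_sum_nsmul_single_entryIdx

end DegenerateMinorHom

section DegeneratePluckerIdeal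

variable (K : Type*) [Field K] (n c : ℕ)

/-- The Plücker relation on `i, j, k, l`, without its first term when the cut after `c` separates
`j` from `k`. -/
noncomputable def degeneratePluckerRelation (i j k l : ℕ) : MvPolynomial (PairIdx n) K :=
  (if j ≤ c ∧ c < k then 0 else T K n i j * T K n k l) - T K n i k * T K n j l +
    T K n i l * T K n j k

/-- The ideal generated by all degenerate Plücker relations. -/
noncomputable def degeneratePluckerIdeal : Ideal (MvPolynomial (PairIdx n) K) :=
  Ideal.span {x | ∃ i j k l : ℕ, i < j ∧ j < k ∧ k < l ∧ l ≤ n + 2 ∧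
    x = degeneratePluckerRelation K n c i j k l}

theorem degeneratePluckerIdeal_eq_span_union :
    degeneratePluckerIdeal K n c = Ideal.span
      ({x : MvPolynomial (PairIdx n) K | ∃ i j k l : ℕ,
          i < j ∧ j ≤ c ∧ c < k ∧ k < l ∧ l ≤ n + 2 ∧
          x = - T K n i k * T K n j l + T K n i l * T K n j k}
        ∪ {x : MvPolynomial (PairIdx n) K | ∃ i j k l : ℕ,
          i < j ∧ j < k ∧ k < l ∧ l ≤ n + 2 ∧ ¬(j ≤ c ∧ c < k) ∧
          x = T K n i j * T K n k l - T K n i k * T K n j l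
            + T K n i l * T K n j k}) := by
  rw [degeneratePluckerIdeal]
  congr 1
  ext x
  simp only [degeneratePluckerRelation, Set.mem_union, Set.mem_ofPred_eq]
  constructor
  · rintro ⟨i, j, k, l, hij, hjk, hkl, hl, rfl⟩
    by_cases hcut : j ≤ c ∧ c < k
    · exact Or.inl ⟨i, j, k, l, hij, hcut.1, hcut.2, hkl, hl, by rw [if_pos hcut]; ring⟩
    · exact Or.inr ⟨i, j, k, l, hij, hjk, hkl, hl, hcut, by rw [if_neg hcut]⟩
  · rintro (⟨i, j, k, l, hij, hj, hk, hkl, hl, rfl⟩ | ⟨i, j, k, l, hij, hjk, hkl, hl, hcut, rfl⟩)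
    · exact ⟨i, j, k, l, hij, hj.trans_lt hk, hkl, hl, by rw [if_pos ⟨hj, hk⟩]; ring⟩
    · exact ⟨i, j, k, l, hij, hjk, hkl, hl, by rw [if_neg hcut]⟩

theorem T_eq_X {a b : ℕ} (h : a < b ∧ b ≤ n + 2) : T K n a b = X ⟨(a, b), h⟩ :=
  dif_pos h

theorem degenerateMinorHom_T {a b : ℕ} (hab : a < b) (hb : b ≤ n + 2) :
    degenerateMinorHom K n c (T K n a b) = degenerateMinor K c a b := by
  rw [T_eq_X K n ⟨hab, hb⟩, degenerateMinorHom_X]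

theorem degeneratePluckerIdeal_le_ker :
    degeneratePluckerIdeal K n c ≤ RingHom.ker (degenerateMinorHom K n c) := by
  rw [degeneratePluckerIdeal, Ideal.span_le]
  rintro _ ⟨i, j, k, l, hij, hjk, hkl, hl, rfl⟩
  rw [SetLike.mem_coe, RingHom.mem_ker, ← degenerateMinor_relation K c hij hjk hkl,
    degeneratePluckerRelation, map_add, map_sub, apply_ite (degenerateMinorHom K n c)]
  simp only [map_mul, map_zero]
  rw [degenerateMinorHom_T, degenerateMinorHom_T, degenerateMinorHom_T, degenerateMinorHom_T,
    degenerateMinorHom_T, degenerateMinorHom_T] <;> lia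

variable {K n c}

theorem mul_nested_mem_of_straightened_mem {V : Submodule K (MvPolynomial (PairIdx n) K)}
    (hV : (degeneratePluckerIdeal K n c).restrictScalars K ≤ V) (f : MvPolynomial (PairIdx n) K)
    {i j k l : ℕ} (hij : i < j) (hjk : j < k) (hkl : k < l) (hl : l ≤ n + 2)
    (hcrossing : f * (T K n i k * T K n j l) ∈ V) (hdisjoint : f * (T K n i j * T K n k l) ∈ V) :
    f * (T K n i l * T K n j k) ∈ V := by
  have hrel : f * degeneratePluckerRelation K n c i j k l ∈ V :=
    hV (Ideal.mul_mem_left _ f (Ideal.subset_span ⟨i, j, k, l, hij, hjk, hkl, hl, rfl⟩))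
  unfold degeneratePluckerRelation at hrel
  split_ifs at hrel
  · convert V.add_mem hrel hcrossing using 1
    ring
  · convert V.sub_mem (V.add_mem hrel hcrossing) hdisjoint using 1
    ring

theorem monomial_add_single_add_single (e : PairIdx n →₀ ℕ) {a b a' b' : ℕ}
    (h : a < b ∧ b ≤ n + 2) (h' : a' < b' ∧ b' ≤ n + 2) :
    monomial (e + (Finsupp.single ⟨(a, b), h⟩ 1 + Finsupp.single ⟨(a', b'), h'⟩ 1)) 1 =
      monomial e 1 * (T K n a b * T K n a' b') := by
  rw [T_eq_X K n h, T_eq_X K n h', X_mul_X_eq_monomial, monomial_mul, one_mul]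

theorem monomial_mem_degeneratePluckerIdeal_sup (d : PairIdx n →₀ ℕ) :
    monomial d 1 ∈ (degeneratePluckerIdeal K n c).restrictScalars K ⊔
      restrictSupport K (nonnestingExponents n) := by
  induction hw : squaredLength n d using Nat.strong_induction_on generalizing d with
  | _ w ih =>
  subst hw
  by_cases hd : d ∈ nonnestingExponents n
  · exact Submodule.mem_sup_right ((monomial_mem_restrictSupport _).mpr (Or.inl hd))
  obtain ⟨e, ⟨⟨i, l⟩, hil⟩, ⟨⟨j, k⟩, hjk⟩, hij, hkl, rfl⟩ :=
    exists_nested_pair_of_notMem_nonnestingExponents hd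
  dsimp only at hij hkl hil hjk
  have hik : i < k ∧ k ≤ n + 2 := by lia
  have hjl : j < l ∧ l ≤ n + 2 := by lia
  have hij' : i < j ∧ j ≤ n + 2 := by lia
  have hkl' : k < l ∧ l ≤ n + 2 := by lia
  rw [monomial_add_single_add_single]
  apply mul_nested_mem_of_straightened_mem le_sup_left _ hij hjk.1 hkl hil.2
  · rw [← monomial_add_single_add_single e hik hjl]
    refine ih _ ?_ _ rfl
    simpa only [map_add, squaredLength_single, add_lt_add_iff_left] using
      sq_length_crossing_lt_nested hij hjk.1 hkl
  · rw [← monomial_add_single_add_single e hij' hkl']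
    refine ih _ ?_ _ rfl
    simpa only [map_add, squaredLength_single, add_lt_add_iff_left] using
      sq_length_disjoint_lt_nested hij hjk.1 hkl

variable (K n c)

theorem degeneratePluckerIdeal_sup_restrictSupport_eq_top :
    (degeneratePluckerIdeal K n c).restrictScalars K ⊔
      restrictSupport K (nonnestingExponents n) = ⊤ := by
  rw [eq_top_iff, ← restrictSupport_univ, restrictSupport_eq_span, Submodule.span_le]
  rintro _ ⟨d, -, rfl⟩
  exact monomial_mem_degeneratePluckerIdeal_sup d

theorem degeneratePluckerIdeal_eq_ker :
    degeneratePluckerIdeal K n c = RingHom.ker (degenerateMinorHom K n c) :=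
  ideal_eq_ker_of_disjoint_of_sup_eq_top (degeneratePluckerIdeal_le_ker K n c)
    (disjoint_restrictSupport_nonnestingExponents_ker K n c)
    (degeneratePluckerIdeal_sup_restrictSupport_eq_top K n c)

end DegeneratePluckerIdeal

theorem stmt7_general (K : Type*) [Field K] (n c : ℕ) :
    (Ideal.span
      ({x : MvPolynomial (PairIdx n) K | ∃ i j k l : ℕ,
          i < j ∧ j ≤ c ∧ c < k ∧ k < l ∧ l ≤ n + 2 ∧
          x = - T K n i k * T K n j l + T K n i l * T K n j k}
        ∪ {x : MvPolynomial (PairIdx n) K | ∃ i j k l : ℕ,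
          i < j ∧ j < k ∧ k < l ∧ l ≤ n + 2 ∧ ¬(j ≤ c ∧ c < k) ∧
          x = T K n i j * T K n k l - T K n i k * T K n j l
            + T K n i l * T K n j k})).IsPrime := by
  rw [← degeneratePluckerIdeal_eq_span_union, degeneratePluckerIdeal_eq_ker]
  exact RingHom.ker_isPrime _

/-- Let `1 ≤ c ≤ n`. In `K[T_{ij} : 0 ≤ i < j ≤ n+2]` the elements
`−T_{ik}T_{jl} + T_{il}T_{jk}` for `0 ≤ i < j ≤ c < k < l ≤ n+2` together with
the Plücker relations `T_{ij}T_{kl} − T_{ik}T_{jl} + T_{il}T_{jk}` for all the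
remaining quadruples `0 ≤ i < j < k < l ≤ n+2` generate a prime ideal. -/
theorem stmt7 (K : Type*) [Field K] [IsAlgClosed K] (n c : ℕ)
    (hn : 2 ≤ n) (hc1 : 1 ≤ c) (hcn : c ≤ n) :
    (Ideal.span
      ({x : MvPolynomial (PairIdx n) K | ∃ i j k l : ℕ,
          i < j ∧ j ≤ c ∧ c < k ∧ k < l ∧ l ≤ n + 2 ∧
          x = - T K n i k * T K n j l + T K n i l * T K n j k}
        ∪ {x : MvPolynomial (PairIdx n) K | ∃ i j k l : ℕ,
          i < j ∧ j < k ∧ k < l ∧ l ≤ n + 2 ∧ ¬(j ≤ c ∧ c < k) ∧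
          x = T K n i j * T K n k l - T K n i k * T K n j l
            + T K n i l * T K n j k})).IsPrime :=
  stmt7_general K n c
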